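/- Let Φ ∈ Δ₂ be a Young function and φ ∈ 𝒢^dec satisfying ∫_r^∞ φ(t)/t dt ≤ Cφ(r). Then the Orlicz–Campanato space modulo constants equals the Orlicz–Morrey space: for every f ∈ 𝓛^{(Φ,φ)}(ℝⁿ), the limit σ(f)=lim_{r→∞} f_{B(0,r)} exists, f − σ(f) ∈ L^{(Φ,φ)}(ℝⁿ), and ‖f‖_{𝓛^{(Φ,φ)}} is comparable to ‖f − σ(f)‖_{L^{(Φ,φ)}} with constants independent of f; conversely every f ∈ L^{(Φ,φ)}(ℝⁿ) lies in 𝓛^{(Φ,φ)}(ℝⁿ) with σ(f)=0 and ‖f‖_{𝓛^{(Φ,φ)}} ≤ 3‖f‖_{L^{(Φ,φ)}}. -/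

import Mathlib

open MeasureTheory Set Metric Filter NNReal ENNReal Topology

noncomputable section

/-- Generalized inverse in the sense of O'Neil. -/
def ginv (Φ : ℝ≥0∞ → ℝ≥0∞) (u : ℝ≥0∞) : ℝ≥0∞ :=
  if u = ⊤ then ⊤ else sInf {t | u < Φ t}

/-- A Young function: increasing, convex, vanishing at 0, left continuous,
not identically zero nor identically infinite. -/
structure IsYoung (Φ : ℝ≥0∞ → ℝ≥0∞) : Prop where
  mono : Monotone Φ
  zero : Φ 0 = 0
  top : Φ ⊤ = ⊤
  conv : ∀ (x y : ℝ≥0∞) (a b : ℝ≥0), a + b = 1 →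
    Φ ((a : ℝ≥0∞) * x + (b : ℝ≥0∞) * y) ≤ (a : ℝ≥0∞) * Φ x + (b : ℝ≥0∞) * Φ y
  lcont : ∀ t : ℝ≥0∞, t < sInf {s | Φ s = ⊤} →
    Filter.Tendsto Φ (nhdsWithin t (Set.Iio t)) (nhds (Φ t))
  pos : ∃ t, 0 < t ∧ Φ t ≠ ⊤
  fin : ∃ t, t ≠ ⊤ ∧ Φ t ≠ 0

/-- `θ` is almost decreasing on `(0,∞)`. -/
def AlmostDecreasingOn (θ : ℝ → ℝ) : Prop :=
  ∃ C : ℝ, 0 < C ∧ ∀ r s : ℝ, 0 < r → r < s → θ s ≤ C * θ r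

/-- `θ` is almost increasing on `(0,∞)`. -/
def AlmostIncreasingOn (θ : ℝ → ℝ) : Prop :=
  ∃ C : ℝ, 0 < C ∧ ∀ r s : ℝ, 0 < r → r < s → θ r ≤ C * θ s

/-- The class `𝒢^dec`: positive, almost decreasing `φ` with `r ↦ φ(r) rⁿ` almost increasing. -/
def Gdec (n : ℕ) (φ : ℝ → ℝ) : Prop :=
  (∀ r : ℝ, 0 < r → 0 < φ r) ∧ AlmostDecreasingOn φ ∧
    AlmostIncreasingOn (fun r => φ r * r ^ n)

variable {n : ℕ}

/-- The Orlicz–Morrey "norm" of `f` on the ball `B(a,r)`. -/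
def ballNorm (Φ : ℝ≥0∞ → ℝ≥0∞) (φ : ℝ → ℝ)
    (f : EuclideanSpace ℝ (Fin n) → ℝ) (a : EuclideanSpace ℝ (Fin n)) (r : ℝ) : ℝ≥0∞ :=
  sInf {lam : ℝ≥0∞ | 0 < lam ∧
    (ENNReal.ofReal (φ r))⁻¹ * ((volume (ball a r))⁻¹ *
      ∫⁻ x in ball a r, Φ (ENNReal.ofReal |f x| / lam)) ≤ 1}

/-- The Orlicz–Morrey norm `‖f‖_{L^{(Φ,φ)}}`: supremum over all balls of `ballNorm`. -/
def omNorm (Φ : ℝ≥0∞ → ℝ≥0∞) (φ : ℝ → ℝ) (f : EuclideanSpace ℝ (Fin n) → ℝ) : ℝ≥0∞ :=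
  ⨆ (a : EuclideanSpace ℝ (Fin n)) (r : ℝ) (_ : 0 < r), ballNorm Φ φ f a r

/-- The Orlicz–Campanato norm `‖f‖_{𝓛^{(Φ,φ)}} = sup_B ‖f − f_B‖_{Φ,φ,B}`. -/
def campNorm (Φ : ℝ≥0∞ → ℝ≥0∞) (φ : ℝ → ℝ) (f : EuclideanSpace ℝ (Fin n) → ℝ) : ℝ≥0∞ :=
  ⨆ (a : EuclideanSpace ℝ (Fin n)) (r : ℝ) (_ : 0 < r),
    ballNorm Φ φ (fun x => f x - ⨍ y in ball a r, f y) a r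


/-- Real-valued even version of the Young function. -/
def GG (Φ : ℝ≥0∞ → ℝ≥0∞) (t : ℝ) : ℝ := (Φ (ENNReal.ofReal |t|)).toReal

structure GoodG (Φ : ℝ≥0∞ → ℝ≥0∞) (G : ℝ → ℝ) (D : ℝ) : Prop where
  eq : ∀ t, Φ (ENNReal.ofReal |t|) = ENNReal.ofReal (G t)
  nonneg : ∀ t, 0 ≤ G t
  mono : ∀ s t, |s| ≤ |t| → G s ≤ G t
  zero : G 0 = 0
  conv : ConvexOn ℝ univ G
  pos : ∀ t, 0 < t → 0 < G t
  dbl : ∀ t, 0 ≤ t → G (2 * t) ≤ D * G t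
  cont : Continuous G

theorem exists_goodG (Φ : ℝ≥0∞ → ℝ≥0∞) (hY : IsYoung Φ) (D : ℝ) (hD : 0 < D)
    (hΔ : ∀ t : ℝ≥0∞, 0 < t → Φ (2 * t) ≤ ENNReal.ofReal D * Φ t) : GoodG Φ (GG Φ) D := by
  have hpow : ∀ (k : ℕ) (t : ℝ≥0∞), 0 < t → Φ (2 ^ k * t) ≤ ENNReal.ofReal D ^ k * Φ t := by
    intro k
    induction k with
    | zero => intro t _; simp
    | succ k ih =>
      intro t ht
      have h1 : (2:ℝ≥0∞) ^ (k+1) * t = 2 * (2 ^ k * t) := by ring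
      rw [h1]
      refine (hΔ _ (by positivity)).trans ?_
      calc _ ≤ ENNReal.ofReal D * (ENNReal.ofReal D ^ k * Φ t) := by gcongr; exact ih t ht
        _ = _ := by ring
  have hfin : ∀ t : ℝ≥0∞, t ≠ ⊤ → Φ t ≠ ⊤ := by
    intro t ht
    obtain ⟨t0, h0, hf⟩ := hY.pos
    by_cases h0t : t0 = ⊤
    · exact absurd (h0t ▸ hY.top) hf
    obtain ⟨k, hk⟩ : ∃ k : ℕ, (t / t0).toReal < 2 ^ k := pow_unbounded_of_one_lt _ (by norm_num)
    have : t ≤ 2 ^ k * t0 := by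
      have h2 : t / t0 ≤ 2 ^ k := by
        rw [← ENNReal.ofReal_toReal (ENNReal.div_ne_top ht h0.ne')]
        refine (ENNReal.ofReal_le_ofReal hk.le).trans ?_
        rw [ENNReal.ofReal_pow (by norm_num)]; simp
      exact (ENNReal.div_le_iff h0.ne' h0t).1 h2
    refine ne_top_of_le_ne_top ?_ ((hY.mono this).trans (hpow k t0 h0))
    exact ENNReal.mul_ne_top (by finiteness) hf
  have hpos : ∀ t : ℝ≥0∞, 0 < t → Φ t ≠ 0 := by
    intro t ht h
    obtain ⟨t0, h0, hf⟩ := hY.fin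
    by_cases htt : t = ⊤
    · rw [htt, hY.top] at h; simp at h
    obtain ⟨k, hk⟩ : ∃ k : ℕ, (t0 / t).toReal < 2 ^ k := pow_unbounded_of_one_lt _ (by norm_num)
    have : t0 ≤ 2 ^ k * t := by
      have h2 : t0 / t ≤ 2 ^ k := by
        rw [← ENNReal.ofReal_toReal (ENNReal.div_ne_top h0 ht.ne')]
        refine (ENNReal.ofReal_le_ofReal hk.le).trans ?_
        rw [ENNReal.ofReal_pow (by norm_num)]; simp
      exact (ENNReal.div_le_iff ht.ne' htt).1 h2
    have h3 := (hY.mono this).trans (hpow k t ht)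
    rw [h, mul_zero] at h3
    exact hf (le_antisymm h3 bot_le)
  have hf' : ∀ t : ℝ, Φ (ENNReal.ofReal t) ≠ ⊤ := fun t => hfin _ ENNReal.ofReal_ne_top
  have heq : ∀ t, Φ (ENNReal.ofReal |t|) = ENNReal.ofReal (GG Φ t) := by
    intro t; rw [GG, ENNReal.ofReal_toReal (hf' _)]
  have hmono : ∀ s t, |s| ≤ |t| → GG Φ s ≤ GG Φ t := by
    intro s t h
    exact ENNReal.toReal_mono (hf' _) (hY.mono (ENNReal.ofReal_le_ofReal h))
  have hnn : ∀ t, 0 ≤ GG Φ t := fun t => ENNReal.toReal_nonneg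
  have hconv : ConvexOn ℝ univ (GG Φ) := by
    refine ⟨convex_univ, ?_⟩
    intro x _ y _ a b ha hb hab
    simp only [smul_eq_mul]
    have h1 : |a * x + b * y| ≤ |(a * |x| + b * |y|)| := by
      rw [abs_of_nonneg (by positivity : 0 ≤ a * |x| + b * |y|)]
      refine (abs_add_le _ _).trans ?_
      rw [abs_mul, abs_mul, abs_of_nonneg ha, abs_of_nonneg hb]
    refine (hmono _ _ h1).trans ?_
    rw [← ENNReal.ofReal_le_ofReal_iff (by have := hnn x; have := hnn y; positivity), ← heq,
      abs_of_nonneg (by positivity : 0 ≤ a * |x| + b * |y|)]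
    have := hY.conv (ENNReal.ofReal |x|) (ENNReal.ofReal |y|) a.toNNReal b.toNNReal
      (by rw [← Real.toNNReal_add ha hb, hab]; simp)
    rw [heq, heq] at this
    have e : ∀ r : ℝ, ((r.toNNReal : ℝ≥0) : ℝ≥0∞) = ENNReal.ofReal r := fun r => rfl
    rw [e, e] at this
    rw [ENNReal.ofReal_add (by positivity) (by positivity), ENNReal.ofReal_mul ha,
      ENNReal.ofReal_mul hb,
      ENNReal.ofReal_add (mul_nonneg ha (hnn x)) (mul_nonneg hb (hnn y)), ENNReal.ofReal_mul ha,
      ENNReal.ofReal_mul hb]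
    exact this
  refine ⟨heq, hnn, hmono, ?_, hconv, ?_, ?_, ?_⟩
  · simp [GG, hY.zero]
  · intro t ht
    refine ENNReal.toReal_pos (hpos _ ?_) (hf' _)
    simp [ht.ne']
  · intro t ht
    rcases ht.eq_or_lt with rfl | ht
    · simp [GG, hY.zero]
    have := hΔ (ENNReal.ofReal |t|) (by simp [ht.ne'])
    rw [heq, ← ENNReal.ofReal_mul hD.le] at this
    rw [← ENNReal.ofReal_le_ofReal_iff (by have := hnn t; positivity), ← heq]
    convert this using 2
    rw [abs_mul, ENNReal.ofReal_mul (by positivity)]; simp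
  · rw [← continuousOn_univ]
    exact hconv.continuousOn isOpen_univ

namespace GoodG
variable {Φ : ℝ≥0∞ → ℝ≥0∞} {G : ℝ → ℝ} {D : ℝ}

theorem smul_le (h : GoodG Φ G D) {c t : ℝ} (hc : 0 ≤ c) (hc1 : c ≤ 1) : G (c * t) ≤ c * G t := by
  have := h.conv.2 (mem_univ t) (mem_univ 0) hc (by linarith : 0 ≤ 1 - c) (by ring)
  simpa [h.zero] using this

theorem le_of (h : GoodG Φ G D) {s t : ℝ} (hs : 0 < s) (hst : G t ≤ G s) : t ≤ s := by
  by_contra! hlt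
  have ht : 0 < t := hs.trans hlt
  have h1 := h.smul_le (c := s / t) (t := t) (by positivity) (by rw [div_le_one ht]; exact hlt.le)
  rw [div_mul_cancel₀ _ ht.ne'] at h1
  have h2 : s / t < 1 := by rw [div_lt_one ht]; exact hlt
  have h3 := h.pos t ht
  nlinarith

theorem exists_inv (h : GoodG Φ G D) (u : ℝ) (hu : 0 < u) : ∃ s, 0 < s ∧ G s = u := by
  have h1 := h.pos 1 one_pos
  set M := u / G 1 + 1 with hM
  have hM1 : 1 ≤ M := by have : 0 < u / G 1 := by positivity
                         linarith
  have hMG : u ≤ G M := by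
    have := h.smul_le (c := M⁻¹) (t := M) (by positivity) (inv_le_one_of_one_le₀ hM1)
    rw [inv_mul_cancel₀ (by positivity)] at this
    have h4 : M * G 1 ≤ G M := by
      rw [← div_eq_inv_mul, le_div_iff₀ (by positivity)] at this; linarith
    have : M * G 1 = u + G 1 := by rw [hM]; field_simp
    linarith
  obtain ⟨s, hs, hsu⟩ := intermediate_value_Icc (by linarith : (0:ℝ) ≤ M) h.cont.continuousOn
    (show u ∈ Icc (G 0) (G M) from ⟨by rw [h.zero]; exact hu.le, hMG⟩)
  refine ⟨s, lt_of_le_of_ne hs.1 ?_, hsu⟩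
  rintro rfl
  rw [h.zero] at hsu; linarith
end GoodG

theorem phi_decay (φ : ℝ → ℝ) (hpos : ∀ r, 0 < r → 0 < φ r) (C Cd : ℝ) (hC : 0 < C) (hCd : 0 < Cd)
    (hd : ∀ r s : ℝ, 0 < r → r < s → φ s ≤ Cd * φ r)
    (hint : ∀ r : ℝ, 0 < r →
      ∫⁻ t in Set.Ioi r, ENNReal.ofReal (φ t / t) ≤ ENNReal.ofReal (C * φ r))
    (R r : ℝ) (hR : 1 < R) (hr : 0 < r) : Real.log R * φ (R * r) ≤ C * Cd * φ r := by
  have hrR : r < R * r := by nlinarith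
  have hp := hpos (R * r) (by positivity)
  have hp' := hpos r hr
  have h0 : ∫ t in Ioo r (R * r), φ (R * r) / Cd * t⁻¹ = φ (R * r) / Cd * Real.log R := by
    rw [← integral_Ioc_eq_integral_Ioo, ← intervalIntegral.integral_of_le hrR.le,
      intervalIntegral.integral_const_mul, integral_inv_of_pos hr (by positivity)]
    congr 2; field_simp
  have hi : IntegrableOn (fun t => φ (R * r) / Cd * t⁻¹) (Ioo r (R * r)) := by
    refine IntegrableOn.mono_set (t := Icc r (R * r)) ?_ Ioo_subset_Icc_self
    refine ContinuousOn.integrableOn_Icc ?_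
    refine continuousOn_const.mul (ContinuousOn.inv₀ continuousOn_id ?_)
    intro x hx; exact (hr.trans_le hx.1).ne'
  have h1 : ENNReal.ofReal (φ (R * r) / Cd * Real.log R) ≤ ENNReal.ofReal (C * φ r) := by
    rw [← h0, ofReal_integral_eq_lintegral_ofReal hi]
    · refine le_trans ?_ (hint r hr)
      refine le_trans ?_ (lintegral_mono_set (show Ioo r (R * r) ⊆ Ioi r from fun x hx => hx.1))
      refine setLIntegral_mono' measurableSet_Ioo ?_
      intro t ht
      have ht0 : 0 < t := hr.trans ht.1
      refine ENNReal.ofReal_le_ofReal ?_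
      rw [div_eq_mul_inv (φ t)]
      gcongr
      rw [div_le_iff₀ hCd, mul_comm (φ t)]
      exact hd _ _ ht0 ht.2
    · filter_upwards [ae_restrict_mem measurableSet_Ioo] with t ht
      have ht0 : 0 < t := hr.trans ht.1
      simp only [Pi.zero_apply]; positivity
  rw [ENNReal.ofReal_le_ofReal_iff (by positivity), div_mul_eq_mul_div, div_le_iff₀ hCd] at h1
  linarith

abbrev EE (n : ℕ) := EuclideanSpace ℝ (Fin n)

def Cond (G : ℝ → ℝ) (φ : ℝ → ℝ) (f : EE n → ℝ) (a : EE n) (r lam : ℝ) : Prop :=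
  ∫⁻ x in ball a r, ENNReal.ofReal (G (f x / lam)) ≤ ENNReal.ofReal (φ r) * volume (ball a r)

section
variable {Φ : ℝ≥0∞ → ℝ≥0∞} {G : ℝ → ℝ} {D : ℝ} {φ : ℝ → ℝ}

theorem cond_iff (h : GoodG Φ G D) (f : EE n → ℝ) (a : EE n) (r lam : ℝ) (hr : 0 < r)
    (hφ : 0 < φ r) (hl : 0 < lam) :
    (ENNReal.ofReal (φ r))⁻¹ * ((volume (ball a r))⁻¹ *
      ∫⁻ x in ball a r, Φ (ENNReal.ofReal |f x| / ENNReal.ofReal lam)) ≤ 1 ↔ Cond G φ f a r lam := by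
  have e : ∀ x, Φ (ENNReal.ofReal |f x| / ENNReal.ofReal lam) = ENNReal.ofReal (G (f x / lam)) := by
    intro x
    rw [← ENNReal.ofReal_div_of_pos hl, ← h.eq, abs_div, abs_of_pos hl]
  simp_rw [e]
  have hv0 : volume (ball a r) ≠ 0 := (measure_ball_pos _ _ hr).ne'
  have hvt : volume (ball a r) ≠ ⊤ := measure_ball_lt_top.ne
  rw [Cond, ENNReal.inv_mul_le_iff (by simpa using hφ) (by simp), mul_one,
    ENNReal.inv_mul_le_iff hv0 hvt, mul_comm]

theorem cond_mono (h : GoodG Φ G D) {f : EE n → ℝ} {a : EE n} {r l l' : ℝ} (hl : 0 < l)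
    (hll : l ≤ l') (hc : Cond G φ f a r l) : Cond G φ f a r l' := by
  refine le_trans (lintegral_mono fun x => ENNReal.ofReal_le_ofReal (h.mono _ _ ?_)) hc
  rw [abs_div, abs_div, abs_of_pos hl, abs_of_pos (hl.trans_le hll)]
  gcongr

theorem cond_of_lt (h : GoodG Φ G D) {f : EE n → ℝ} {a : EE n} {r l : ℝ} (hr : 0 < r)
    (hφ : 0 < φ r) (hlt : ballNorm Φ φ f a r < ENNReal.ofReal l) : Cond G φ f a r l := by
  rw [ballNorm, sInf_lt_iff] at hlt
  obtain ⟨m, ⟨hm0, hm⟩, hml⟩ := hlt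
  lift m to ℝ≥0 using (hml.trans ENNReal.ofReal_lt_top).ne
  have hm0' : (0:ℝ) < m := by simpa using hm0
  rw [← ENNReal.ofReal_coe_nnreal, cond_iff h f a r m hr hφ hm0'] at hm
  refine cond_mono h hm0' ?_ hm
  rw [← ENNReal.ofReal_coe_nnreal, ENNReal.ofReal_lt_ofReal_iff_of_nonneg hm0'.le] at hml
  exact hml.le

theorem le_of_cond (h : GoodG Φ G D) {f : EE n → ℝ} {a : EE n} {r l : ℝ} (hr : 0 < r)
    (hφ : 0 < φ r) (hl : 0 < l) (hc : Cond G φ f a r l) :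
    ballNorm Φ φ f a r ≤ ENNReal.ofReal l :=
  sInf_le ⟨by simpa using hl, (cond_iff h f a r l hr hφ hl).2 hc⟩

theorem jensen (h : GoodG Φ G D) {f : EE n → ℝ} {a : EE n} {r l : ℝ} (hr : 0 < r)
    (hφ : 0 < φ r) (hf : IntegrableOn f (ball a r)) (hc : Cond G φ f a r l) :
    G ((⨍ y in ball a r, |f y|) / l) ≤ φ r := by
  have hv0 : volume (ball a r) ≠ 0 := (measure_ball_pos _ _ hr).ne'
  have hvt : volume (ball a r) ≠ ⊤ := measure_ball_lt_top.ne
  have : NeZero (volume.restrict (ball a r)) := ⟨by simpa using hv0⟩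
  have : IsFiniteMeasure (volume.restrict (ball a r)) := ⟨by simpa using hvt.lt_top⟩
  have hfi : Integrable (fun y => |f y| / l) (volume.restrict (ball a r)) := hf.abs.div_const l
  have e : ∀ y, G (|f y| / l) = G (f y / l) := fun y =>
    le_antisymm (h.mono _ _ (by simp [abs_div])) (h.mono _ _ (by simp [abs_div]))
  have hm : AEStronglyMeasurable (fun y => G (|f y| / l)) (volume.restrict (ball a r)) :=
    h.cont.comp_aestronglyMeasurable hfi.1
  have hlt : ∫⁻ x in ball a r, ENNReal.ofReal (G (|f x| / l)) ≤
      ENNReal.ofReal (φ r) * volume (ball a r) := by simp_rw [e]; exact hc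
  have hgi : Integrable (fun y => G (|f y| / l)) (volume.restrict (ball a r)) := by
    refine ⟨hm, ?_⟩
    rw [hasFiniteIntegral_iff_ofReal (Eventually.of_forall fun y => h.nonneg _)]
    exact hlt.trans_lt (ENNReal.mul_lt_top (by simp) hvt.lt_top)
  have hj := h.conv.map_average_le h.cont.continuousOn isClosed_univ
    (Eventually.of_forall fun y => mem_univ _) hfi hgi
  have h1 : (⨍ y in ball a r, |f y| / l) = (⨍ y in ball a r, |f y|) / l := by
    simp only [average_eq, integral_div, smul_eq_mul]; ring
  rw [h1] at hj
  refine hj.trans ?_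
  rw [average_eq, integral_eq_lintegral_of_nonneg_ae (Eventually.of_forall fun y => h.nonneg _) hm,
    smul_eq_mul, measureReal_restrict_apply_univ]
  have h2 := ENNReal.toReal_mono (ENNReal.mul_ne_top (by simp) hvt) hlt
  rw [ENNReal.toReal_mul, ENNReal.toReal_ofReal hφ.le] at h2
  have hp : 0 < volume.real (ball a r) := ENNReal.toReal_pos hv0 hvt
  rw [← div_eq_inv_mul, div_le_iff₀ hp]
  exact h2

theorem cond_add (h : GoodG Φ G D) {f : EE n → ℝ} {a : EE n} {r l c : ℝ}
    (hφ : 0 < φ r) (hc : Cond G φ f a r l) (hG : G (c / l) ≤ φ r) :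
    Cond G φ (fun x => f x + c) a r (2 * l) := by
  have key : ∀ x, ENNReal.ofReal (G ((f x + c) / (2 * l))) ≤
      ENNReal.ofReal (1/2) * (ENNReal.ofReal (G (f x / l)) + ENNReal.ofReal (φ r)) := by
    intro x
    rw [← ENNReal.ofReal_add (h.nonneg _) hφ.le, ← ENNReal.ofReal_mul (by norm_num)]
    refine ENNReal.ofReal_le_ofReal ?_
    have := h.conv.2 (mem_univ (f x / l)) (mem_univ (c / l)) (by norm_num : (0:ℝ) ≤ 1/2)
      (by norm_num : (0:ℝ) ≤ 1/2) (by norm_num)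
    simp only [smul_eq_mul] at this
    have e : (f x + c) / (2 * l) = 1/2 * (f x / l) + 1/2 * (c / l) := by
      rw [← mul_add, ← add_div]; rw [div_mul_eq_div_div]; ring
    rw [e]; linarith
  refine (lintegral_mono key).trans ?_
  rw [lintegral_const_mul' _ _ (by simp), lintegral_add_right _ measurable_const, setLIntegral_const]
  unfold Cond at hc
  calc _ ≤ ENNReal.ofReal (1/2) * (ENNReal.ofReal (φ r) * volume (ball a r) +
        ENNReal.ofReal (φ r) * volume (ball a r)) := by gcongr
    _ = (ENNReal.ofReal (1/2) * 2) * (ENNReal.ofReal (φ r) * volume (ball a r)) := by ring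
    _ = _ := by
      have : ENNReal.ofReal (1/2) * 2 = 1 := by
        rw [show (2:ℝ≥0∞) = ENNReal.ofReal 2 by simp, ← ENNReal.ofReal_mul (by norm_num)]; norm_num
      rw [this, one_mul]

theorem avg_sub_le {f : EE n → ℝ} {a b : EE n} {r q c : ℝ} (hr : 0 < r) (hq : 0 < q)
    (hsub : ball a r ⊆ ball b q) (hf : LocallyIntegrable f volume) :
    |(⨍ y in ball a r, f y) - c| ≤ (q / r) ^ n * ⨍ y in ball b q, |f y - c| := by
  have hI : ∀ (a : EE n) r, IntegrableOn f (ball a r) := fun a r =>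
    (hf.integrableOn_isCompact (isCompact_closedBall a r)).mono_set ball_subset_closedBall
  have hvp : ∀ (a : EE n) r, 0 < r → 0 < volume.real (ball a r) := fun a r hr =>
    ENNReal.toReal_pos (measure_ball_pos _ _ hr).ne' measure_ball_lt_top.ne
  have hIc : ∀ (a : EE n) r, IntegrableOn (fun y => f y - c) (ball a r) := fun a r =>
    (hI a r).sub (integrableOn_const measure_ball_lt_top.ne)
  have hvol : ∀ (a : EE n) r, 0 < r → volume.real (ball a r) = r ^ n * volume.real (ball (0:EE n) 1) := by
    intro a r hr
    rw [Measure.real, Measure.addHaar_ball_of_pos _ _ hr, ENNReal.toReal_mul,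
      ENNReal.toReal_ofReal (by positivity)]
    simp [Measure.real]
  have h1 : (⨍ y in ball a r, f y) - c = (volume.real (ball a r))⁻¹ * ∫ y in ball a r, (f y - c) := by
    rw [integral_sub (hI a r) (integrableOn_const measure_ball_lt_top.ne), setAverage_eq]
    simp only [setIntegral_const, smul_eq_mul]
    have := hvp a r hr
    field_simp
  rw [h1, abs_mul, abs_of_pos (inv_pos.2 (hvp a r hr)), setAverage_eq, smul_eq_mul]
  have h2 : |∫ y in ball a r, (f y - c)| ≤ ∫ y in ball b q, |f y - c| := by
    refine (abs_integral_le_integral_abs).trans ?_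
    exact setIntegral_mono_set (hIc b q).abs (Eventually.of_forall fun _ => abs_nonneg _)
      (LE.le.eventuallyLE hsub)
  have h3 : (q / r) ^ n * ((volume.real (ball b q))⁻¹ * ∫ y in ball b q, |f y - c|) =
      (volume.real (ball a r))⁻¹ * ∫ y in ball b q, |f y - c| := by
    rw [hvol a r hr, hvol b q hq, div_pow]
    have := hvp (0:EE n) 1 one_pos
    field_simp
  rw [h3]
  have := hvp a r hr
  gcongr
end

section
variable {Φ : ℝ≥0∞ → ℝ≥0∞} {G : ℝ → ℝ} {D : ℝ} {φ : ℝ → ℝ}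

theorem integrableOn_ball' {f : EE n → ℝ} (hf : LocallyIntegrable f volume) (a : EE n) (r : ℝ) :
    IntegrableOn f (ball a r) :=
  (hf.integrableOn_isCompact (isCompact_closedBall a r)).mono_set ball_subset_closedBall

theorem abs_avg_le {f : EE n → ℝ} (a : EE n) (r : ℝ) :
    |⨍ y in ball a r, f y| ≤ ⨍ y in ball a r, |f y| := by
  simp only [setAverage_eq, smul_eq_mul, abs_mul]
  rw [abs_of_nonneg (by positivity : 0 ≤ (volume.real (ball a r))⁻¹)]
  gcongr
  exact abs_integral_le_integral_abs

/-- Morrey bounds Campanato with constant 3. -/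
theorem camp_le_om (h : GoodG Φ G D) (hφ : ∀ r, 0 < r → 0 < φ r) {f : EE n → ℝ}
    (hf : LocallyIntegrable f volume) (hfin : omNorm Φ φ f < ⊤) :
    campNorm Φ φ f ≤ 3 * omNorm Φ φ f := by
  have h2 : campNorm Φ φ f ≤ 2 * omNorm Φ φ f := by
    refine iSup_le fun a => iSup_le fun r => iSup_le fun hr => ?_
    rw [mul_comm, ← ENNReal.div_le_iff_le_mul (by simp) (by simp)]
    refine le_of_forall_gt_imp_ge_of_dense fun m hm => ?_
    rcases eq_or_ne m ⊤ with rfl | hmt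
    · exact le_top
    have hm0 : 0 < m.toReal := ENNReal.toReal_pos (bot_le.trans_lt hm).ne' hmt
    have hme : m = ENNReal.ofReal m.toReal := (ENNReal.ofReal_toReal hmt).symm
    have hb : ballNorm Φ φ f a r ≤ omNorm Φ φ f :=
      le_iSup_of_le a (le_iSup_of_le r (le_iSup_of_le hr le_rfl))
    have hc := cond_of_lt h hr (hφ r hr) (l := m.toReal) (by rw [← hme]; exact hb.trans_lt hm)
    have hj := jensen h hr (hφ r hr) (integrableOn_ball' hf a r) hc
    have hj2 : G ((-⨍ y in ball a r, f y) / m.toReal) ≤ φ r := by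
      refine (h.mono _ _ ?_).trans hj
      rw [abs_div, abs_div, abs_neg]
      refine div_le_div_of_nonneg_right ?_ (abs_nonneg _)
      exact (abs_avg_le a r).trans (le_abs_self _)
    have := le_of_cond h hr (hφ r hr) (by positivity) (cond_add h (hφ r hr) hc hj2)
    rw [ENNReal.div_le_iff_le_mul (by simp) (by simp)]
    refine le_trans (le_of_eq ?_) (this.trans (le_of_eq ?_))
    · simp only [sub_eq_add_neg]
    · rw [ENNReal.ofReal_mul (by norm_num), ← hme]; simp [mul_comm]
  refine h2.trans ?_
  gcongr
  norm_num

theorem ball_avg_sub_const {f : EE n → ℝ} (hf : LocallyIntegrable f volume) (a : EE n) {r : ℝ}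
    (hr : 0 < r) (c : ℝ) : (⨍ y in ball a r, (f y - c)) = (⨍ y in ball a r, f y) - c := by
  have hp : 0 < volume.real (ball a r) :=
    ENNReal.toReal_pos (measure_ball_pos _ _ hr).ne' measure_ball_lt_top.ne
  rw [setAverage_eq, setAverage_eq,
    integral_sub (integrableOn_ball' hf a r) (integrableOn_const measure_ball_lt_top.ne)]
  simp only [setIntegral_const, smul_eq_mul]
  field_simp

theorem camp_sub_const {f : EE n → ℝ} (hf : LocallyIntegrable f volume) (c : ℝ) :
    campNorm Φ φ (fun x => f x - c) = campNorm Φ φ f := by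
  unfold campNorm
  congr 1; ext a; congr 1; ext r; congr 1; ext hr
  rw [ball_avg_sub_const hf a hr]
  simp

end
theorem main_limit {n : ℕ} {Φ : ℝ≥0∞ → ℝ≥0∞} {G : ℝ → ℝ} {D R : ℝ} {φ s : ℝ → ℝ}
    (h : GoodG Φ G D) (hφ : ∀ r, 0 < r → 0 < φ r) (hR : 1 < R)
    (hs : ∀ r, 0 < r → 0 < s r) (hGs : ∀ r, 0 < r → G (s r) = φ r)
    (hhalf : ∀ r, 0 < r → s (R * r) ≤ s r / 2) (hs0 : Tendsto s atTop (𝓝 0))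
    (f : EE n → ℝ) (hf : LocallyIntegrable f volume) (hfin : campNorm Φ φ f < ⊤) :
    ∃ σ : ℝ, (∀ a : EE n, Tendsto (fun r : ℝ => ⨍ y in ball a r, f y) atTop (𝓝 σ)) ∧
      omNorm Φ φ (fun x => f x - σ) ≤ ENNReal.ofReal (2 * R ^ n) * campNorm Φ φ f := by
  have hR0 : 0 < R := by linarith
  have hcond : ∀ l : ℝ, campNorm Φ φ f < ENNReal.ofReal l → ∀ (a : EE n) r, 0 < r →
      Cond G φ (fun x => f x - ⨍ y in ball a r, f y) a r l := by
    intro l hl a r hr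
    refine cond_of_lt h hr (hφ r hr) (lt_of_le_of_lt ?_ hl)
    exact le_iSup_of_le a (le_iSup_of_le r (le_iSup_of_le hr le_rfl))
  have hpos : ∀ l : ℝ, campNorm Φ φ f < ENNReal.ofReal l → 0 < l := by
    intro l hl; simpa using bot_le.trans_lt hl
  have hm : ∀ l : ℝ, campNorm Φ φ f < ENNReal.ofReal l → ∀ (a : EE n) r, 0 < r →
      (⨍ x in ball a r, |f x - ⨍ y in ball a r, f y|) ≤ l * s r := by
    intro l hl a r hr
    have hl0 := hpos l hl
    have hj := jensen h hr (hφ r hr)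
      ((integrableOn_ball' hf a r).sub (integrableOn_const measure_ball_lt_top.ne)) (hcond l hl a r hr)
    rw [← hGs r hr] at hj
    have := h.le_of (hs r hr) hj
    rw [div_le_iff₀ hl0] at this
    rw [mul_comm]; exact this
  have hsub : ∀ l : ℝ, campNorm Φ φ f < ENNReal.ofReal l → ∀ (a b : EE n) r q, 0 < r → 0 < q →
      ball a r ⊆ ball b q →
      |(⨍ y in ball a r, f y) - ⨍ y in ball b q, f y| ≤ (q / r) ^ n * (l * s q) := by
    intro l hl a b r q hr hq hss
    refine (avg_sub_le hr hq hss hf).trans ?_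
    gcongr
    exact hm l hl b q hq
  have hspow : ∀ r, 0 < r → ∀ k : ℕ, s (R ^ k * r) ≤ s r / 2 ^ k := by
    intro r hr k
    induction k with
    | zero => simp
    | succ k ih =>
      have := hhalf (R ^ k * r) (by positivity)
      rw [show R ^ (k + 1) * r = R * (R ^ k * r) by ring]
      refine this.trans ?_
      rw [pow_succ, ← div_div]
      linarith
  obtain ⟨l0, hl0⟩ : ∃ l : ℝ, campNorm Φ φ f < ENNReal.ofReal l := by
    obtain ⟨m, hm⟩ := ENNReal.lt_iff_exists_nnreal_btwn.1 hfin
    exact ⟨m, by simpa using hm.1⟩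
  have hstep : ∀ l : ℝ, campNorm Φ φ f < ENNReal.ofReal l → ∀ (a : EE n) r, 0 < r → ∀ k : ℕ,
      dist (⨍ y in ball a (R ^ k * r), f y) (⨍ y in ball a (R ^ (k + 1) * r), f y) ≤
        (R ^ n * (l * s r)) / 2 / 2 ^ k := by
    intro l hl a r hr k
    have hl0 := hpos l hl
    have h1 := hsub l hl a a (R ^ k * r) (R ^ (k+1) * r) (by positivity) (by positivity)
      (ball_subset_ball (by rw [pow_succ]; nlinarith [pow_pos hR0 k, mul_pos (pow_pos hR0 k) hr]))
    rw [show R ^ (k+1) * r / (R ^ k * r) = R by rw [pow_succ]; field_simp] at h1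
    rw [Real.dist_eq]
    refine h1.trans ?_
    have h2 := hspow r hr (k + 1)
    calc _ ≤ R ^ n * (l * (s r / 2 ^ (k+1))) := by gcongr
      _ = _ := by rw [pow_succ]; field_simp
  have hlim : ∀ (a : EE n) r, 0 < r → ∃ τ, Tendsto (fun k : ℕ => ⨍ y in ball a (R ^ k * r), f y)
      atTop (𝓝 τ) := fun a r hr =>
    cauchySeq_tendsto_of_complete (cauchySeq_of_le_geometric_two (hstep l0 hl0 a r hr))
  -- uniqueness of the limits
  have hsame : ∀ (a b : EE n) r q, 0 < r → 0 < q → ball a r ⊆ ball b q → dist a b + r ≤ q →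
      ∀ τ τ', Tendsto (fun k : ℕ => ⨍ y in ball a (R ^ k * r), f y) atTop (𝓝 τ) →
      Tendsto (fun k : ℕ => ⨍ y in ball b (R ^ k * q), f y) atTop (𝓝 τ') → τ = τ' := by
    intro a b r q hr hq _ hd τ τ' h1 h2
    have h3 := h1.sub h2
    have h4 : Tendsto (fun k : ℕ => (⨍ y in ball a (R ^ k * r), f y) -
        ⨍ y in ball b (R ^ k * q), f y) atTop (𝓝 0) := by
      refine squeeze_zero_norm (a := fun k : ℕ => (q / r) ^ n * (l0 * s (R ^ k * q))) ?_ ?_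
      · intro k
        have hk : 1 ≤ R ^ k := one_le_pow₀ hR.le
        have := hsub l0 hl0 a b (R ^ k * r) (R ^ k * q) (by positivity) (by positivity)
          (ball_subset_ball' (by nlinarith [dist_nonneg (x := a) (y := b)]))
        rw [mul_div_mul_left _ _ (by positivity)] at this
        exact this
      · have h5 : Tendsto (fun k : ℕ => R ^ k * q) atTop atTop :=
          (tendsto_pow_atTop_atTop_of_one_lt hR).atTop_mul_const hq
        simpa using ((hs0.comp h5).const_mul l0).const_mul ((q / r) ^ n)
    have := tendsto_nhds_unique h3 h4
    linarith
  obtain ⟨σ, hσ⟩ := hlim 0 1 one_pos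
  have hall : ∀ (a : EE n) r, 0 < r →
      Tendsto (fun k : ℕ => ⨍ y in ball a (R ^ k * r), f y) atTop (𝓝 σ) := by
    intro a r hr
    obtain ⟨τ, hτ⟩ := hlim a r hr
    have hq : 0 < dist a 0 + r + 1 := by positivity
    obtain ⟨τ', hτ'⟩ := hlim (0 : EE n) _ hq
    have e1 := hsame a 0 r _ hr hq (ball_subset_ball' (by linarith)) (by linarith) τ τ' hτ hτ'
    have e2 := hsame 0 0 1 _ one_pos hq
      (ball_subset_ball' (by simp; nlinarith [norm_nonneg a]))
      (by simp; nlinarith [norm_nonneg a]) σ τ' hσ hτ'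
    rw [e2, ← e1]; exact hτ
  have hdist : ∀ l : ℝ, campNorm Φ φ f < ENNReal.ofReal l → ∀ (a : EE n) r, 0 < r →
      |(⨍ y in ball a r, f y) - σ| ≤ R ^ n * (l * s r) := by
    intro l hl a r hr
    have := dist_le_of_le_geometric_two_of_tendsto₀ (hstep l hl a r hr) (hall a r hr)
    simpa [Real.dist_eq] using this
  refine ⟨σ, ?_, ?_⟩
  · intro a
    rw [tendsto_iff_dist_tendsto_zero]
    refine squeeze_zero' (g := fun r => R ^ n * (l0 * s r)) (Eventually.of_forall fun _ => dist_nonneg) ?_ ?_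
    · filter_upwards [eventually_gt_atTop 0] with r hr
      rw [Real.dist_eq]
      exact hdist l0 hl0 a r hr
    · simpa using (hs0.const_mul l0).const_mul (R ^ n)
  · have hK : 0 < 2 * R ^ n := by positivity
    have hK1 : 1 ≤ R ^ n := one_le_pow₀ hR.le
    refine iSup_le fun a => iSup_le fun r => iSup_le fun hr => ?_
    rw [mul_comm, ← ENNReal.div_le_iff_le_mul (by left; simpa using pow_pos hR0 n) (Or.inl ENNReal.ofReal_ne_top)]
    refine le_of_forall_gt_imp_ge_of_dense fun m hm => ?_
    rcases eq_or_ne m ⊤ with rfl | hmt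
    · exact le_top
    have hm0 : 0 < m.toReal := ENNReal.toReal_pos (bot_le.trans_lt hm).ne' hmt
    have hme : m = ENNReal.ofReal m.toReal := (ENNReal.ofReal_toReal hmt).symm
    rw [ENNReal.div_le_iff_le_mul (by left; simpa using pow_pos hR0 n) (Or.inl ENNReal.ofReal_ne_top)]
    rw [hme] at hm
    have hc := cond_mono h hm0 (l' := R ^ n * m.toReal) (by nlinarith) (hcond _ hm a r hr)
    have hG : G (((⨍ y in ball a r, f y) - σ) / (R ^ n * m.toReal)) ≤ φ r := by
      rw [← hGs r hr]
      refine h.mono _ _ ?_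
      rw [abs_div, abs_of_pos (by positivity : 0 < R ^ n * m.toReal), abs_of_pos (hs r hr),
        div_le_iff₀ (by positivity)]
      have := hdist _ hm a r hr
      linarith
    have := le_of_cond h hr (hφ r hr) (by positivity) (cond_add h (hφ r hr) hc hG)
    refine le_trans (le_of_eq ?_) (this.trans (le_of_eq ?_))
    · simp
    · nth_rewrite 2 [hme]
      rw [← ENNReal.ofReal_mul hm0.le]; congr 1; ring

/-- for `Φ ∈ Δ₂` and `φ ∈ 𝒢^dec` with `∫_r^∞ φ(t)/t dt ≤ C φ(r)`,
the Orlicz–Campanato space modulo constants coincides with the Orlicz–Morrey space: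
for `f ∈ 𝓛^{(Φ,φ)}` the limit `σ(f) = lim_{r→∞} f_{B(0,r)}` exists,
`f − σ(f) ∈ L^{(Φ,φ)}` with norm comparable to `‖f‖_{𝓛^{(Φ,φ)}}`; and conversely
every `f ∈ L^{(Φ,φ)}` lies in `𝓛^{(Φ,φ)}` with `σ(f) = 0` and
`‖f‖_{𝓛^{(Φ,φ)}} ≤ 3 ‖f‖_{L^{(Φ,φ)}}`. -/
theorem stmt13 {n : ℕ} (Φ : ℝ≥0∞ → ℝ≥0∞) (hY : IsYoung Φ)
    (hΔ : ∃ C : ℝ, 0 < C ∧ ∀ t : ℝ≥0∞, 0 < t → Φ (2 * t) ≤ ENNReal.ofReal C * Φ t)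
    (φ : ℝ → ℝ) (hφ : Gdec n φ) (C : ℝ) (hC : 0 < C)
    (hint : ∀ r : ℝ, 0 < r →
      ∫⁻ t in Set.Ioi r, ENNReal.ofReal (φ t / t) ≤ ENNReal.ofReal (C * φ r)) :
    (∃ C' : ℝ≥0∞, 0 < C' ∧ C' ≠ ⊤ ∧
      ∀ f : EuclideanSpace ℝ (Fin n) → ℝ, LocallyIntegrable f volume →
        campNorm Φ φ f < ⊤ →
        ∃ σ : ℝ,
          (∀ a : EuclideanSpace ℝ (Fin n),
            Filter.Tendsto (fun r : ℝ => ⨍ y in ball a r, f y) Filter.atTop (nhds σ)) ∧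
          omNorm Φ φ (fun x => f x - σ) ≤ C' * campNorm Φ φ f ∧
          campNorm Φ φ f ≤ C' * omNorm Φ φ (fun x => f x - σ)) ∧
    (∀ f : EuclideanSpace ℝ (Fin n) → ℝ, LocallyIntegrable f volume →
      omNorm Φ φ f < ⊤ →
      (∀ a : EuclideanSpace ℝ (Fin n),
        Filter.Tendsto (fun r : ℝ => ⨍ y in ball a r, f y) Filter.atTop (nhds 0)) ∧
      campNorm Φ φ f ≤ 3 * omNorm Φ φ f) := by
  obtain ⟨D, hD, hΔ⟩ := hΔ
  obtain ⟨hφp, ⟨Cd, hCd, hd⟩, -⟩ := hφ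
  have h := exists_goodG Φ hY D hD hΔ
  set G := GG Φ with hGdef
  have hdec := phi_decay φ hφp C Cd hC hCd hd hint
  set R := Real.exp (D * (C * Cd)) with hRdef
  have hR : 1 < R := by rw [hRdef, Real.one_lt_exp_iff]; positivity
  have hR0 : 0 < R := by linarith
  have hDφ : ∀ r, 0 < r → D * φ (R * r) ≤ φ r := by
    intro r hr
    have := hdec R r hR hr
    rw [hRdef, Real.log_exp, ← hRdef] at this
    have hcc : 0 < C * Cd := by positivity
    have h2 : (C * Cd) * (D * φ (R * r)) ≤ (C * Cd) * φ r := by linarith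
    exact le_of_mul_le_mul_left h2 hcc
  have hφ0 : Tendsto φ atTop (𝓝 0) := by
    refine squeeze_zero' (g := fun r => C * Cd * φ 1 / Real.log r) ?_ ?_ ?_
    · filter_upwards [eventually_gt_atTop 0] with r hr using (hφp r hr).le
    · filter_upwards [eventually_gt_atTop 1] with r hr
      have := hdec r 1 hr one_pos
      rw [le_div_iff₀ (Real.log_pos hr)]
      rw [mul_one] at this
      linarith
    · exact tendsto_const_nhds.div_atTop Real.tendsto_log_atTop
  have hex : ∀ r, ∃ s, 0 < r → 0 < s ∧ G s = φ r := by
    intro r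
    by_cases hr : 0 < r
    · obtain ⟨s, hs⟩ := h.exists_inv (φ r) (hφp r hr)
      exact ⟨s, fun _ => hs⟩
    · exact ⟨0, fun h => absurd h hr⟩
  choose s hs' using hex
  have hs : ∀ r, 0 < r → 0 < s r := fun r hr => (hs' r hr).1
  have hGs : ∀ r, 0 < r → G (s r) = φ r := fun r hr => (hs' r hr).2
  have hhalf : ∀ r, 0 < r → s (R * r) ≤ s r / 2 := by
    intro r hr
    have hRr : 0 < R * r := by positivity
    have h1 := h.dbl (s (R * r)) (hs _ hRr).le
    rw [hGs _ hRr] at h1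
    have := h.le_of (hs r hr) ((h1.trans (hDφ r hr)).trans (hGs r hr).ge)
    linarith
  have hs0 : Tendsto s atTop (𝓝 0) := by
    rw [Metric.tendsto_nhds]
    intro ε hε
    have hG := h.pos (ε / 2) (by positivity)
    filter_upwards [eventually_gt_atTop 0, hφ0.eventually_lt_const hG] with r hr hr2
    have := h.le_of (s := ε / 2) (by positivity) ((hGs r hr).le.trans hr2.le)
    rw [Real.dist_eq, sub_zero, abs_of_pos (hs r hr)]
    linarith
  refine ⟨⟨ENNReal.ofReal (2 * R ^ n) + 3, by positivity, by finiteness, ?_⟩, ?_⟩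
  · intro f hf hfin
    obtain ⟨σ, h1, h2⟩ := main_limit h hφp hR hs hGs hhalf hs0 f hf hfin
    refine ⟨σ, h1, h2.trans ?_, ?_⟩
    · gcongr; exact le_self_add
    · have hf' : LocallyIntegrable (fun x => f x - σ) volume :=
        hf.sub (locallyIntegrable_const σ)
      rw [← camp_sub_const hf σ]
      refine (camp_le_om h hφp hf' (h2.trans_lt ?_)).trans ?_
      · exact ENNReal.mul_lt_top ENNReal.ofReal_lt_top hfin
      · gcongr; exact le_add_self
  · intro f hf hfin
    refine ⟨?_, camp_le_om h hφp hf hfin⟩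
    intro a
    obtain ⟨l0, hl0⟩ : ∃ l : ℝ, omNorm Φ φ f < ENNReal.ofReal l := by
      obtain ⟨m, hm⟩ := ENNReal.lt_iff_exists_nnreal_btwn.1 hfin
      exact ⟨m, by simpa using hm.1⟩
    have hl : 0 < l0 := by simpa using bot_le.trans_lt hl0
    refine squeeze_zero_norm' (a := fun r => l0 * s r) ?_ (by simpa using hs0.const_mul l0)
    filter_upwards [eventually_gt_atTop 0] with r hr
    have hb : ballNorm Φ φ f a r ≤ omNorm Φ φ f :=
      le_iSup_of_le a (le_iSup_of_le r (le_iSup_of_le hr le_rfl))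
    have hc := cond_of_lt h hr (hφp r hr) (hb.trans_lt hl0)
    have hj := jensen h hr (hφp r hr) (integrableOn_ball' hf a r) hc
    have := h.le_of (hs r hr) (hj.trans (hGs r hr).ge)
    rw [div_le_iff₀ hl] at this
    refine (abs_avg_le a r).trans ?_
    linarith
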